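/- Let {a_n} be a sequence of real numbers with a_n → 0 as n → ∞. Let 0 < δ < c and ε > 0 be constants with δ < 1 and δ + ε < c − ε, and let χ be a smooth function on ℝ with χ(s) = 1 for |s| ≤ δ + ε and χ(s) = 0 for |s| ≥ c − ε. Then both integrals ∫_ℝ e^{i n (s³/3 + a_n s)} (1 − χ(s)) ds and ∫_ℝ e^{i n (s³/3 + a_n s)} s (1 − χ(s)) ds (as improper oscillatory integrals) are O(n^{−N}) as n → ∞ for every N > 0. -/

import Mathlib

/-! The amplitudes that occur are `s ^ j * ((s ^ 2 + a)⁻¹) ^ k * ψ s`, where `ψ` is smooth with bounded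
derivatives of all orders and vanishes on `|s| < d`, and `|a| ≤ d ^ 2 / 2`.  On the support of `ψ`
the derivative `s ^ 2 + a` of the phase is at least `s ^ 2 / 2`, so such an amplitude is
`O(|s| ^ (j - 2 * k))` uniformly in `a`.

One integration by parts (`OscBound.step`) replaces an amplitude with exponents `(j, k)` by
`1 / n` times a combination of amplitudes with exponents `(j - 1, k + 1)`, `(j + 1, k + 2)` and
`(j, k + 1)`, the last one with `ψ'` in place of `ψ`.  The growth order `j - 2 * k` drops by at
least two, and the boundary terms vanish at infinity as long as `j ≤ 2 * k + 1`.  For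
`j + 2 ≤ 2 * k` the integral converges absolutely (`oscBound_base`), so by iteration every amplitude
with `j ≤ 2 * k + 1` has an improper integral which is `O(n ^ (-M))` for all `M`, uniformly in `a`
(`oscBound_all`).  The theorem is the case `k = 0`, `j = 0, 1`, `ψ = 1 - χ`, `d = δ`, valid once
`|a_n| ≤ δ ^ 2 / 2`.  For the finitely many other `n` only convergence is required; it follows
by comparison with a cutoff which is `1` on a larger interval, as changing the cutoff alters
the integrand only on a bounded set.
-/


open Filter Topology Asymptotics MeasureTheory

noncomputable section

/-- The oscillating factor `exp (i n (s ^ 3 / 3 + a s))`. -/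
def osc (n : ℕ) (a s : ℝ) : ℂ :=
  Complex.exp (Complex.I * (n : ℂ) * ((s : ℂ) ^ 3 / 3 + (a : ℂ) * (s : ℂ)))

/-- The amplitude `s ^ j * (s ^ 2 + a) ^ (-k) * ψ s`; for `k > 0` it is used only where `ψ`
vanishes near the real zeros of `s ^ 2 + a`. -/
def amp (a : ℝ) (j k : ℕ) (ψ : ℝ → ℝ) (s : ℝ) : ℝ := s ^ j * ((s ^ 2 + a)⁻¹) ^ k * ψ s

/-- Smooth functions with bounded derivatives of all orders that vanish on `|s| < d`. -/
structure Adm (d : ℝ) (ψ : ℝ → ℝ) : Prop where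
  smooth : ContDiff ℝ (⊤ : ℕ∞) ψ
  zero : ∀ s, |s| < d → ψ s = 0
  bdd : ∀ k : ℕ, ∃ C : ℝ, ∀ s, |iteratedDeriv k ψ s| ≤ C

/-- The improper integrals of `osc n a * amp a j k ψ` converge and are `O(n ^ (-M))`, uniformly for
`|a| ≤ d ^ 2 / 2`. -/
def OscBound (d : ℝ) (M j k : ℕ) (ψ : ℝ → ℝ) : Prop :=
  ∃ C : ℝ, ∀ n : ℕ, 1 ≤ n → ∀ a : ℝ, |a| ≤ d ^ 2 / 2 → ∃ L : ℂ,
    Tendsto (fun R : ℝ => ∫ s in (-R)..R, osc n a s * (amp a j k ψ s : ℂ)) atTop (𝓝 L) ∧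
    ‖L‖ * (n : ℝ) ^ M ≤ C

lemma norm_osc (n : ℕ) (a s : ℝ) : ‖osc n a s‖ = 1 := by
  have : osc n a s = Complex.exp (((n * (s ^ 3 / 3 + a * s) : ℝ) : ℂ) * Complex.I) := by
    unfold osc; congr 1; push_cast; ring
  rw [this, Complex.norm_exp_ofReal_mul_I]

lemma hasDerivAt_osc (n : ℕ) (a s : ℝ) :
    HasDerivAt (osc n a) (osc n a s * (Complex.I * n * ((s ^ 2 + a : ℝ) : ℂ))) s := by
  have h : HasDerivAt (fun z : ℂ => Complex.exp (Complex.I * (n : ℂ) * (z ^ 3 / 3 + (a : ℂ) * z)))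
      (osc n a s * (Complex.I * n * ((s ^ 2 + a : ℝ) : ℂ))) (s : ℂ) := by
    have h1 : HasDerivAt (fun z : ℂ => Complex.I * (n : ℂ) * (z ^ 3 / 3 + (a : ℂ) * z))
        (Complex.I * n * ((s ^ 2 + a : ℝ) : ℂ)) (s : ℂ) := by
      have h2 := (((hasDerivAt_pow 3 (s : ℂ)).div_const 3).add
        ((hasDerivAt_id (s : ℂ)).const_mul (a : ℂ))).const_mul (Complex.I * (n : ℂ))
      refine h2.congr_deriv ?_
      push_cast; norm_num
    exact h1.cexp
  exact h.comp_ofReal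

lemma continuous_osc (n : ℕ) (a : ℝ) : Continuous (osc n a) :=
  continuous_iff_continuousAt.2 fun s => (hasDerivAt_osc n a s).continuousAt

lemma Adm.deriv_eq_zero {d : ℝ} {ψ : ℝ → ℝ} (h : Adm d ψ) {s : ℝ} (hs : |s| < d) :
    deriv ψ s = 0 := by
  have : ψ =ᶠ[𝓝 s] fun _ => 0 := by
    filter_upwards [(isOpen_lt continuous_abs continuous_const).mem_nhds hs] with x hx
    exact h.zero x hx
  rw [this.deriv_eq]; simp

lemma Adm.deriv {d : ℝ} {ψ : ℝ → ℝ} (h : Adm d ψ) : Adm d (deriv ψ) where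
  smooth := by
    have := (contDiff_infty_iff_deriv.1 h.smooth).2
    exact this
  zero s hs := h.deriv_eq_zero hs
  bdd k := by
    obtain ⟨C, hC⟩ := h.bdd (k + 1)
    exact ⟨C, fun s => by rw [← iteratedDeriv_succ']; exact hC s⟩

/-- A cutoff function gives an admissible complement. -/
lemma adm_one_sub {d D : ℝ} {χ : ℝ → ℝ} (hχ : ContDiff ℝ (⊤ : ℕ∞) χ)
    (h1 : ∀ s : ℝ, |s| < d → χ s = 1) (h0 : ∀ s : ℝ, D ≤ |s| → χ s = 0) :
    Adm d (fun s => 1 - χ s) where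
  smooth := contDiff_const.sub hχ
  zero s hs := by simp [h1 s hs]
  bdd k := by
    have hcs : HasCompactSupport χ := by
      refine HasCompactSupport.intro (isCompact_closedBall (0 : ℝ) D) fun x hx => h0 x ?_
      simp only [Metric.mem_closedBall, dist_zero_right, Real.norm_eq_abs, not_le] at hx
      exact hx.le
    have hcont : Continuous (iteratedDeriv k χ) :=
      hχ.continuous_iteratedDeriv k (by exact_mod_cast le_top)
    have hcs' : ∀ k, HasCompactSupport (iteratedDeriv k χ) := by
      intro k
      induction k with
      | zero => simpa using hcs
      | succ k ih => rw [iteratedDeriv_succ]; exact ih.deriv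
    obtain ⟨C, hC⟩ := (hcs' k).exists_bound_of_continuous hcont
    rcases k with _ | k
    · refine ⟨1 + C, fun s => ?_⟩
      have := hC s
      simp only [iteratedDeriv_zero, Real.norm_eq_abs] at this ⊢
      exact (abs_sub _ _).trans (by simpa using this)
    · refine ⟨C, fun s => ?_⟩
      have h2 : iteratedDeriv (k + 1) (fun s => 1 - χ s) s = - iteratedDeriv (k + 1) χ s := by
        rw [iteratedDeriv_const_sub (Nat.succ_pos k), iteratedDeriv_neg]
      rw [h2, abs_neg]
      exact hC s

lemma phase_deriv_lower {d a s : ℝ} (hd : 0 < d) (ha : |a| ≤ d ^ 2 / 2) (hs : d ≤ |s|) :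
    0 < s ^ 2 ∧ s ^ 2 / 2 ≤ s ^ 2 + a := by
  have h1 : d ^ 2 ≤ s ^ 2 := by
    rw [← sq_abs s]; gcongr
  have h2 := (abs_le.1 ha).1
  have h3 : 0 < d ^ 2 := by positivity
  constructor <;> linarith

lemma hasDerivAt_amp {d a : ℝ} (hd : 0 < d) (ha : |a| ≤ d ^ 2 / 2) {ψ : ℝ → ℝ} (h : Adm d ψ)
    (j k : ℕ) (s : ℝ) :
    HasDerivAt (amp a j k ψ) (j * amp a (j - 1) k ψ s - 2 * k * amp a (j + 1) (k + 1) ψ s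
      + amp a j k (deriv ψ) s) s := by
  rcases lt_or_ge |s| d with hs | hs
  · have h0 : amp a j k ψ =ᶠ[𝓝 s] fun _ => 0 := by
      filter_upwards [(isOpen_lt continuous_abs continuous_const).mem_nhds hs] with x hx
      simp [amp, h.zero x hx]
    have : HasDerivAt (amp a j k ψ) 0 s := (hasDerivAt_const s (0 : ℝ)).congr_of_eventuallyEq h0
    convert this using 1
    simp [amp, h.zero s hs, h.deriv_eq_zero hs]
  · obtain ⟨hs2, hlow⟩ := phase_deriv_lower hd ha hs
    have hne : s ^ 2 + a ≠ 0 := by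
      have : 0 < s ^ 2 + a := by linarith
      exact this.ne'
    have hψ : HasDerivAt ψ (deriv ψ s) s :=
      (h.smooth.differentiable (by simp)).differentiableAt.hasDerivAt
    have hu : HasDerivAt (fun x : ℝ => (x ^ 2 + a)⁻¹) (-(2 * s) / (s ^ 2 + a) ^ 2) s := by
      refine (((hasDerivAt_pow 2 s).add_const a).inv hne).congr_deriv ?_
      simp
    have := ((hasDerivAt_pow j s).mul (hu.pow k)).mul hψ
    refine this.congr_deriv ?_
    simp only [amp, Pi.mul_apply, Pi.pow_apply]
    rcases k with _ | k
    · simp; ring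
    · simp only [Nat.add_sub_cancel, div_eq_mul_inv, ← inv_pow]
      push_cast
      ring

lemma continuous_amp {d a : ℝ} (hd : 0 < d) (ha : |a| ≤ d ^ 2 / 2) {ψ : ℝ → ℝ} (h : Adm d ψ)
    (j k : ℕ) : Continuous (amp a j k ψ) :=
  continuous_iff_continuousAt.2 fun s => (hasDerivAt_amp hd ha h j k s).continuousAt

/-- An amplitude of order at most `-p` decays like `|s| ^ (-p)`, uniformly in `a`. -/
lemma amp_bound {d : ℝ} (hd : 0 < d) {ψ : ℝ → ℝ} (h : Adm d ψ) {j k p : ℕ} (hjk : j + p ≤ 2 * k) :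
    ∃ K : ℝ, ∀ a, |a| ≤ d ^ 2 / 2 → ∀ s, |amp a j k ψ s| * |s| ^ p ≤ K := by
  obtain ⟨C, hC⟩ := h.bdd 0
  simp only [iteratedDeriv_zero] at hC
  have hC0 : 0 ≤ C := (abs_nonneg _).trans (hC 0)
  refine ⟨2 ^ k * C * (d ^ (2 * k - j - p))⁻¹, fun a ha s => ?_⟩
  rcases lt_or_ge |s| d with hs | hs
  · simp only [amp, h.zero s hs]
    simp only [mul_zero, abs_zero, zero_mul]
    positivity
  · obtain ⟨hs2, hlow⟩ := phase_deriv_lower hd ha hs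
    have hs0 : 0 < |s| := hd.trans_le hs
    have hu0 : 0 < s ^ 2 + a := by linarith
    have hu : |(s ^ 2 + a)⁻¹| ≤ 2 * (|s| ^ 2)⁻¹ := by
      rw [abs_of_pos (inv_pos.2 hu0), sq_abs]
      calc (s ^ 2 + a)⁻¹ ≤ (s ^ 2 / 2)⁻¹ := by gcongr
        _ = 2 * (s ^ 2)⁻¹ := by rw [inv_div]; rfl
    obtain ⟨q, hq⟩ := Nat.exists_eq_add_of_le hjk
    have hq' : 2 * k - j - p = q := by omega
    rw [hq']
    calc |amp a j k ψ s| * |s| ^ p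
        = |s| ^ j * |(s ^ 2 + a)⁻¹| ^ k * |ψ s| * |s| ^ p := by
          simp only [amp, abs_mul, abs_pow]
      _ ≤ |s| ^ j * (2 * (|s| ^ 2)⁻¹) ^ k * C * |s| ^ p := by
          gcongr
          exact hC s
      _ = 2 ^ k * C * (|s| ^ q)⁻¹ := by
          have : ((|s| ^ 2)⁻¹) ^ k = (|s| ^ j * |s| ^ p * |s| ^ q)⁻¹ := by
            rw [inv_pow, ← pow_mul, hq, pow_add, pow_add]
          rw [mul_pow, this]
          field_simp
      _ ≤ 2 ^ k * C * (d ^ q)⁻¹ := by gcongr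

/-- Absolute convergence for amplitudes of order at most `-2`. -/
lemma oscBound_base {d : ℝ} (hd : 0 < d) {ψ : ℝ → ℝ} (h : Adm d ψ) {j k : ℕ}
    (hjk : j + 2 ≤ 2 * k) : OscBound d 0 j k ψ := by
  obtain ⟨K0, hK0⟩ := amp_bound hd h (p := 0) (show j + 0 ≤ 2 * k by omega)
  obtain ⟨K2, hK2⟩ := amp_bound hd h hjk
  refine ⟨∫ s : ℝ, (K0 + K2) * (1 + s ^ 2)⁻¹, fun n _ a ha => ?_⟩
  have hb : ∀ s, ‖osc n a s * (amp a j k ψ s : ℂ)‖ ≤ (K0 + K2) * (1 + s ^ 2)⁻¹ := by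
    intro s
    rw [norm_mul, norm_osc, one_mul, Complex.norm_real, Real.norm_eq_abs, ← div_eq_mul_inv,
      le_div_iff₀ (by positivity)]
    have h0 := hK0 a ha s
    have h2 := hK2 a ha s
    rw [pow_zero, mul_one] at h0
    rw [sq_abs] at h2
    linarith
  have hg : Integrable fun s : ℝ => (K0 + K2) * (1 + s ^ 2)⁻¹ :=
    integrable_inv_one_add_sq.const_mul _
  have hi : Integrable fun s : ℝ => osc n a s * (amp a j k ψ s : ℂ) :=
    hg.mono' ((continuous_osc n a).mul
      (Complex.continuous_ofReal.comp (continuous_amp hd ha h j k))).aestronglyMeasurable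
      (Eventually.of_forall hb)
  refine ⟨∫ s : ℝ, osc n a s * (amp a j k ψ s : ℂ),
    intervalIntegral_tendsto_integral hi tendsto_neg_atTop_atBot tendsto_id, ?_⟩
  rw [pow_zero, mul_one]
  exact norm_integral_le_of_norm_le hg (Eventually.of_forall hb)

/-- Amplitudes of negative order vanish at infinity, which kills the boundary terms of the
integration by parts. -/
lemma tendsto_boundary {d a : ℝ} (hd : 0 < d) (ha : |a| ≤ d ^ 2 / 2) {ψ : ℝ → ℝ} (h : Adm d ψ)
    {j k : ℕ} (hjk : j + 1 ≤ 2 * k) (n : ℕ) {f : ℝ → ℝ} (hf : Tendsto (fun R => |f R|) atTop atTop) :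
    Tendsto (fun R => osc n a (f R) * (amp a j k ψ (f R) : ℂ)) atTop (𝓝 0) := by
  obtain ⟨K, hK⟩ := amp_bound hd h hjk
  have hlim : Tendsto (fun R => K / |f R|) atTop (𝓝 0) := hf.const_div_atTop K
  refine squeeze_zero_norm' ?_ hlim
  filter_upwards [hf.eventually_gt_atTop 0] with R hR
  rw [norm_mul, norm_osc, one_mul, Complex.norm_real, Real.norm_eq_abs, le_div_iff₀ hR]
  simpa using hK a ha (f R)

/-- Integration by parts gains a factor `1 / n`. -/
lemma OscBound.step {d : ℝ} (hd : 0 < d) {ψ : ℝ → ℝ} (h : Adm d ψ) {M j k : ℕ}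
    (hjk : j ≤ 2 * k + 1) (h1 : OscBound d M (j - 1) (k + 1) ψ)
    (h2 : OscBound d M (j + 1) (k + 2) ψ) (h3 : OscBound d M j (k + 1) (deriv ψ)) :
    OscBound d (M + 1) j k ψ := by
  obtain ⟨C1, h1⟩ := h1
  obtain ⟨C2, h2⟩ := h2
  obtain ⟨C3, h3⟩ := h3
  refine ⟨j * C1 + 2 * (k + 1) * C2 + C3, fun n hn a ha => ?_⟩
  obtain ⟨L1, hL1, hB1⟩ := h1 n hn a ha
  obtain ⟨L2, hL2, hB2⟩ := h2 n hn a ha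
  obtain ⟨L3, hL3, hB3⟩ := h3 n hn a ha
  have hn0 : (0 : ℝ) < n := by exact_mod_cast hn
  have hIn : Complex.I * (n : ℂ) ≠ 0 :=
    mul_ne_zero Complex.I_ne_zero (by exact_mod_cast hn0.ne')
  have hc : ∀ (j k : ℕ) {φ : ℝ → ℝ}, Adm d φ →
      Continuous fun s => osc n a s * (amp a j k φ s : ℂ) := fun j k φ hφ =>
    (continuous_osc n a).mul (Complex.continuous_ofReal.comp (continuous_amp hd ha hφ j k))
  have hcancel : ∀ s, (s ^ 2 + a) * amp a j (k + 1) ψ s = amp a j k ψ s := by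
    intro s
    rcases lt_or_ge |s| d with hs | hs
    · simp [amp, h.zero s hs]
    · obtain ⟨hs2, hlow⟩ := phase_deriv_lower hd ha hs
      have hne : s ^ 2 + a ≠ 0 := by
        have : 0 < s ^ 2 + a := by linarith
        exact this.ne'
      simp only [amp, pow_succ]
      field_simp
  have hparts : ∀ R : ℝ, ∫ s in (-R)..R, osc n a s * (amp a j k ψ s : ℂ) =
      (Complex.I * n)⁻¹ * ((osc n a R * (amp a j (k + 1) ψ R : ℂ)
        - osc n a (-R) * (amp a j (k + 1) ψ (-R) : ℂ))
        - ((j : ℂ) * (∫ s in (-R)..R, osc n a s * (amp a (j - 1) (k + 1) ψ s : ℂ))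
          - 2 * (k + 1) * (∫ s in (-R)..R, osc n a s * (amp a (j + 1) (k + 2) ψ s : ℂ))
          + ∫ s in (-R)..R, osc n a s * (amp a j (k + 1) (deriv ψ) s : ℂ))) := by
    intro R
    have hD : ∀ s, HasDerivAt (fun s => osc n a s * (amp a j (k + 1) ψ s : ℂ))
        (Complex.I * n * (osc n a s * (amp a j k ψ s : ℂ))
          + ((j : ℂ) * (osc n a s * (amp a (j - 1) (k + 1) ψ s : ℂ))
          - 2 * (k + 1) * (osc n a s * (amp a (j + 1) (k + 2) ψ s : ℂ))
          + osc n a s * (amp a j (k + 1) (deriv ψ) s : ℂ))) s := by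
      intro s
      refine ((hasDerivAt_osc n a s).mul
        (hasDerivAt_amp hd ha h j (k + 1) s).ofReal_comp).congr_deriv ?_
      rw [← hcancel s]
      push_cast
      ring
    have i0 := (((hc j k h).const_mul (Complex.I * n)).intervalIntegrable (μ := volume) (-R) R)
    have i1 := (((hc (j - 1) (k + 1) h).const_mul (j : ℂ)).intervalIntegrable
      (μ := volume) (-R) R)
    have i2 := (((hc (j + 1) (k + 2) h).const_mul (2 * ((k : ℂ) + 1))).intervalIntegrable
      (μ := volume) (-R) R)
    have i3 := ((hc j (k + 1) h.deriv).intervalIntegrable (μ := volume) (-R) R)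
    have hF := intervalIntegral.integral_eq_sub_of_hasDerivAt (a := -R) (b := R)
      (fun s _ => hD s) (i0.add ((i1.sub i2).add i3))
    rw [intervalIntegral.integral_add i0 ((i1.sub i2).add i3),
      intervalIntegral.integral_add (i1.sub i2) i3, intervalIntegral.integral_sub i1 i2,
      intervalIntegral.integral_const_mul, intervalIntegral.integral_const_mul,
      intervalIntegral.integral_const_mul] at hF
    rw [eq_inv_mul_iff_mul_eq₀ hIn, ← hF]
    ring
  refine ⟨(Complex.I * n)⁻¹ * ((0 - 0) - ((j : ℂ) * L1 - 2 * (k + 1) * L2 + L3)), ?_, ?_⟩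
  · have hbp := tendsto_boundary hd ha h (show j + 1 ≤ 2 * (k + 1) by omega) n
      (f := fun R => R) tendsto_abs_atTop_atTop
    have hbm := tendsto_boundary hd ha h (show j + 1 ≤ 2 * (k + 1) by omega) n
      (f := fun R => -R) (by simpa only [abs_neg] using tendsto_abs_atTop_atTop)
    exact (((hbp.sub hbm).sub (((hL1.const_mul _).sub (hL2.const_mul _)).add hL3)).const_mul
      _).congr fun R => (hparts R).symm
  · have hnorm : ‖(Complex.I * n)⁻¹ * ((0 - 0) - ((j : ℂ) * L1 - 2 * (k + 1) * L2 + L3))‖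
        ≤ (n : ℝ)⁻¹ * (j * ‖L1‖ + 2 * (k + 1) * ‖L2‖ + ‖L3‖) := by
      rw [norm_mul, norm_inv, norm_mul, Complex.norm_I, one_mul, Complex.norm_natCast, sub_zero,
        zero_sub, norm_neg]
      gcongr
      refine (norm_add_le _ _).trans ?_
      gcongr
      refine (norm_sub_le _ _).trans (le_of_eq ?_)
      have hk : ‖(k : ℂ) + 1‖ = k + 1 := by
        exact_mod_cast Complex.norm_natCast (k + 1)
      rw [norm_mul, norm_mul, norm_mul, Complex.norm_natCast, hk]
      simp
    calc _ ≤ (n : ℝ)⁻¹ * (j * ‖L1‖ + 2 * (k + 1) * ‖L2‖ + ‖L3‖) * (n : ℝ) ^ (M + 1) := by gcongr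
      _ = j * (‖L1‖ * n ^ M) + 2 * (k + 1) * (‖L2‖ * n ^ M) + ‖L3‖ * n ^ M := by
          rw [pow_succ]; field_simp
      _ ≤ _ := by gcongr

lemma OscBound.weaken {d : ℝ} {ψ : ℝ → ℝ} {M j k : ℕ} (h : OscBound d (M + 1) j k ψ) :
    OscBound d M j k ψ := by
  obtain ⟨C, h⟩ := h
  refine ⟨C, fun n hn a ha => ?_⟩
  obtain ⟨L, hL, hB⟩ := h n hn a ha
  refine ⟨L, hL, le_trans ?_ hB⟩
  have : (1 : ℝ) ≤ n := by exact_mod_cast hn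
  gcongr
  omega

lemma oscBound_all {d : ℝ} (hd : 0 < d) (M : ℕ) : ∀ {ψ : ℝ → ℝ}, Adm d ψ → ∀ {j k : ℕ},
    j ≤ 2 * k + 1 → OscBound d M j k ψ := by
  -- Orders `-1` and `0` need one integration by parts before the integral converges absolutely,
  -- order `1` needs two.
  have hA : ∀ {ψ : ℝ → ℝ}, Adm d ψ → ∀ {j k : ℕ}, j ≤ 2 * k → OscBound d 0 j k ψ :=
    fun h _ _ hjk => (OscBound.step hd h (by omega) (oscBound_base hd h (by omega))
      (oscBound_base hd h (by omega)) (oscBound_base hd h.deriv (by omega))).weaken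
  induction M with
  | zero =>
    exact fun h _ _ hjk => (OscBound.step hd h hjk (hA h (by omega))
      (hA h (by omega)) (hA h.deriv (by omega))).weaken
  | succ M ih =>
    exact fun h _ _ hjk => OscBound.step hd h hjk (ih h (by omega))
      (ih h (by omega)) (ih h.deriv (by omega))

/-- Convergence for every real `a`: a cutoff `b` equal to `1` on a sufficiently large interval
depending on `a` replaces `χ`, and the two integrands differ only on a bounded set. -/
lemma exists_limit {χ : ℝ → ℝ} (hχ : ContDiff ℝ (⊤ : ℕ∞) χ) {D : ℝ}
    (h0 : ∀ s : ℝ, D ≤ |s| → χ s = 0) {n : ℕ} (hn : 1 ≤ n) (a : ℝ) {j : ℕ} (hj : j ≤ 1) :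
    ∃ L : ℂ, Tendsto (fun R : ℝ => ∫ s in (-R)..R,
      osc n a s * (amp a j 0 (fun s => 1 - χ s) s : ℂ)) atTop (𝓝 L) := by
  set d : ℝ := 1 + 2 * |a| with hdd
  have hd : 0 < d := by positivity
  have had : |a| ≤ d ^ 2 / 2 := by
    rw [hdd]; nlinarith [abs_nonneg a]
  let b : ContDiffBump (0 : ℝ) := ⟨d, d + 1, hd, by linarith⟩
  have hb1 : ∀ s : ℝ, |s| < d → b s = 1 := fun s hs =>
    b.one_of_mem_closedBall (by simpa using hs.le)
  have hb0 : ∀ s : ℝ, d + 1 ≤ |s| → b s = 0 := fun s hs =>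
    b.zero_of_le_dist (by simpa using hs)
  obtain ⟨C, hC⟩ := oscBound_all hd 0 (adm_one_sub b.contDiff hb1 hb0) (j := j) (k := 0)
    (by omega)
  obtain ⟨L, hL, -⟩ := hC n hn a had
  have hdiff : Continuous fun s => osc n a s * ((s ^ j * (b s - χ s) : ℝ) : ℂ) :=
    (continuous_osc n a).mul (Complex.continuous_ofReal.comp
      ((continuous_pow j).mul (b.continuous.sub hχ.continuous)))
  have hcont : Continuous fun s => osc n a s * (amp a j 0 (fun s => 1 - b s) s : ℂ) := by
    unfold amp
    simp only [pow_zero, mul_one]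
    exact (continuous_osc n a).mul (Complex.continuous_ofReal.comp
      ((continuous_pow j).mul (continuous_const.sub b.continuous)))
  have hzero : ∀ s : ℝ, max D (d + 1) ≤ |s| →
      osc n a s * ((s ^ j * (b s - χ s) : ℝ) : ℂ) = 0 := by
    intro s hs
    rw [hb0 s ((le_max_right _ _).trans hs), h0 s ((le_max_left _ _).trans hs)]
    simp
  have hi : Integrable fun s => osc n a s * ((s ^ j * (b s - χ s) : ℝ) : ℂ) := by
    refine hdiff.integrable_of_hasCompactSupport
      (HasCompactSupport.intro (isCompact_closedBall (0 : ℝ) (max D (d + 1))) fun x hx =>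
        hzero x ?_)
    simp only [Metric.mem_closedBall, dist_zero_right, Real.norm_eq_abs, not_le] at hx
    exact hx.le
  have hlim := hL.add (intervalIntegral_tendsto_integral hi tendsto_neg_atTop_atBot tendsto_id)
  refine ⟨_, hlim.congr fun R => ?_⟩
  rw [id, ← intervalIntegral.integral_add (hcont.intervalIntegrable _ _)
    (hdiff.intervalIntegrable _ _)]
  congr 1
  ext s
  simp only [amp]
  push_cast
  ring

/-- The uniform bounds give `O(n ^ (-N))` for the limits along `aseq`. -/
lemma isBigO_limit {aseq : ℕ → ℝ} (ha : Tendsto aseq atTop (𝓝 0)) {d : ℝ} (hd : 0 < d)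
    {ψ : ℝ → ℝ} (h : Adm d ψ) {j : ℕ} (hj : j ≤ 1) {L : ℕ → ℂ}
    (hL : ∀ n : ℕ, 1 ≤ n → Tendsto (fun R : ℝ => ∫ s in (-R)..R,
      osc n (aseq n) s * (amp (aseq n) j 0 ψ s : ℂ)) atTop (𝓝 (L n))) (N : ℝ) :
    L =O[atTop] fun n : ℕ => (n : ℝ) ^ (-N) := by
  obtain ⟨C, hC⟩ := oscBound_all hd ⌈N⌉₊ h (j := j) (k := 0) (by omega)
  refine IsBigO.of_bound C ?_
  have hev : ∀ᶠ n in atTop, |aseq n| ≤ d ^ 2 / 2 := by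
    have := ha.abs
    rw [abs_zero] at this
    exact this.eventually_le_const (by positivity)
  filter_upwards [hev, eventually_ge_atTop 1] with n hna hn
  obtain ⟨L', hL', hB⟩ := hC n hn _ hna
  rw [tendsto_nhds_unique (hL n hn) hL']
  have hn1 : (1 : ℝ) ≤ n := by exact_mod_cast hn
  have hn0 : (0 : ℝ) < n := by linarith
  have hpow : (n : ℝ) ^ N ≤ (n : ℝ) ^ ⌈N⌉₊ := by
    rw [← Real.rpow_natCast]
    exact Real.rpow_le_rpow_of_exponent_le hn1 (Nat.le_ceil N)
  rw [Real.norm_of_nonneg (by positivity), Real.rpow_neg hn0.le, ← div_eq_mul_inv,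
    le_div_iff₀ (Real.rpow_pos_of_pos hn0 _)]
  exact le_trans (by gcongr) hB

/-- Lemma `error1`: let `a_n → 0`, and let `χ` be a smooth cutoff with
`χ = 1` on `{|s| ≤ δ + ε}` and `χ = 0` on `{|s| ≥ c − ε}` (`0 < δ < c`, `δ < 1`,
`δ + ε < c − ε`, `ε > 0`). Then the improper oscillatory integrals
`∫ e^{in(s³/3 + a_n s)}(1 − χ(s)) ds` and `∫ e^{in(s³/3 + a_n s)} s (1 − χ(s)) ds`
(limits of `∫_{−R}^{R}` as `R → ∞`) exist for `n ≥ 1` and are `O(n^{−N})` for every `N > 0`. -/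
theorem stmt14 (aseq : ℕ → ℝ) (ha : Tendsto aseq atTop (𝓝 0))
    (c δ ε : ℝ) (hδ0 : 0 < δ) (hδc : δ < c) (hδ1 : δ < 1) (hε : 0 < ε)
    (hsep : δ + ε < c - ε)
    (χ : ℝ → ℝ) (hχ : ContDiff ℝ (⊤ : ℕ∞) χ)
    (hχ1 : ∀ s : ℝ, |s| ≤ δ + ε → χ s = 1)
    (hχ0 : ∀ s : ℝ, c - ε ≤ |s| → χ s = 0) :
    ∃ L₁ L₂ : ℕ → ℂ,
      (∀ n : ℕ, 1 ≤ n →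
        Tendsto (fun R : ℝ => ∫ s in (-R)..R,
            Complex.exp (Complex.I * (n : ℂ) * ((s : ℂ) ^ 3 / 3 + (aseq n : ℂ) * (s : ℂ))) *
              ((1 - χ s : ℝ) : ℂ))
          atTop (𝓝 (L₁ n)) ∧
        Tendsto (fun R : ℝ => ∫ s in (-R)..R,
            Complex.exp (Complex.I * (n : ℂ) * ((s : ℂ) ^ 3 / 3 + (aseq n : ℂ) * (s : ℂ))) *
              (s : ℂ) * ((1 - χ s : ℝ) : ℂ))
          atTop (𝓝 (L₂ n))) ∧
      ∀ N : ℝ, 0 < N →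
        (L₁ =O[atTop] fun n : ℕ => (n : ℝ) ^ (-N)) ∧
        (L₂ =O[atTop] fun n : ℕ => (n : ℝ) ^ (-N)) := by
  have hadm : Adm δ (fun s => 1 - χ s) :=
    adm_one_sub hχ (fun s hs => hχ1 s (by linarith)) hχ0
  have hex : ∀ j : ℕ, j ≤ 1 → ∃ L : ℕ → ℂ, ∀ n : ℕ, 1 ≤ n →
      Tendsto (fun R : ℝ => ∫ s in (-R)..R,
        osc n (aseq n) s * (amp (aseq n) j 0 (fun s => 1 - χ s) s : ℂ)) atTop (𝓝 (L n)) := by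
    intro j hj
    choose! L hL using fun (n : ℕ) (hn : 1 ≤ n) => exists_limit hχ hχ0 hn (aseq n) hj
    exact ⟨L, hL⟩
  obtain ⟨L₁, hL₁⟩ := hex 0 (by omega)
  obtain ⟨L₂, hL₂⟩ := hex 1 le_rfl
  refine ⟨L₁, L₂, fun n hn => ⟨?_, ?_⟩, fun N _ =>
    ⟨isBigO_limit ha hδ0 hadm (by omega) hL₁ N, isBigO_limit ha hδ0 hadm le_rfl hL₂ N⟩⟩
  · simpa [osc, amp] using hL₁ n hn
  · simpa [osc, amp, mul_assoc] using hL₂ n hn
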